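/- arXiv:1909.05605 — 2 statements merged into one kernel-verified Lean document; each statement's English description precedes it below -/
import Mathlib

section
/- Let m ≥ 2 be an integer with m ≡ 5 (mod 6), let f(x) = x^m on ℤ_3, and let t = ν_3(m + 1). For each integer l ≥ 0, each a ∈ {0, 1, …, 3^(t−1) − 1}, and each sign ε ∈ {1, −1}, let x₀ = ε + 3^(l+1) + 3^(l+2)·a (a 3-adic unit, with inverse x₀⁻¹ in ℤ_3) and set M_{l,a,ε} = (x₀ + 3^(t+l+1)ℤ_3) ∪ (x₀⁻¹ + 3^(t+l+1)ℤ_3). Then the sets M_{l,a,ε} are pairwise disjoint clopen subsets of ℤ_3, each M_{l,a,ε} is a minimal component of f (f(M_{l,a,ε}) ⊆ M_{l,a,ε} and every forward orbit of f in M_{l,a,ε} is dense in M_{l,a,ε}), and the union of all the M_{l,a,ε} together with the fixed-point set {1, −1} equals the set of 3-adic units ℤ_3 \ 3ℤ_3. -/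
namespace MZ3

/-- lifting the exponent, in any commutative semiring -/
lemma pow_lin {R : Type*} [CommSemiring R] (l : ℕ) (u : R) (n : ℕ) :
    ∃ c, (1 + 3 ^ (l + 1) * u) ^ n = 1 + 3 ^ (l + 1) * (n * u + 3 * c) := by
  induction n with
  | zero => exact ⟨0, by simp⟩
  | succ n ih =>
    obtain ⟨c, hc⟩ := ih
    refine ⟨c + 3 ^ l * (n * u + 3 * c) * u, ?_⟩
    rw [pow_succ, hc]
    push_cast
    ring

lemma pow_lte {R : Type*} [CommSemiring R] (l : ℕ) (u : R) (s : ℕ) :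
    ∃ c, (1 + 3 ^ (l + 1) * u) ^ (3 ^ s) = 1 + 3 ^ (l + s + 1) * (u + 3 * c) := by
  induction s with
  | zero => exact ⟨0, by simp⟩
  | succ s ih =>
    obtain ⟨c, hc⟩ := ih
    refine ⟨c + 3 ^ (l + s) * (u + 3 * c) ^ 2
      + 3 ^ (l + s) * 3 ^ (l + s) * (u + 3 * c) ^ 3, ?_⟩
    rw [pow_succ 3 s, pow_mul, hc]
    have e : l + (s + 1) + 1 = (l + s) + 2 := by ring
    rw [e]
    ring

lemma tri (u : ℤ_[3]) : ∃ v, u = 3 * v ∨ u = 3 * v + 1 ∨ u = 3 * v + 2 := by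
  obtain ⟨n, hn, h⟩ := PadicInt.exists_mem_range u
  rw [PadicInt.maximalIdeal_eq_span_p, Ideal.mem_span_singleton] at h
  obtain ⟨v, hv⟩ := h
  refine ⟨v, ?_⟩
  push_cast at hv
  interval_cases n
  · left; linear_combination hv
  · right; left; push_cast at hv; linear_combination hv
  · right; right; push_cast at hv; linear_combination hv

lemma not1 : ¬ (3 : ℤ_[3]) ∣ 1 := by
  intro h
  have := (PadicInt.prime_p (p := 3)).not_isUnit
  exact this (isUnit_of_dvd_one (by exact_mod_cast h))

lemma p3 : Prime (3 : ℤ_[3]) := by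
  exact_mod_cast PadicInt.prime_p (p := 3)

lemma not2 : ¬ (3 : ℤ_[3]) ∣ 2 := by
  intro h
  apply not1
  have := dvd_sub (dvd_refl (3 : ℤ_[3])) h
  have e : (3 : ℤ_[3]) - 2 = 1 := by norm_num
  rwa [e] at this

lemma dvd_nat (k n : ℕ) (h : (3 : ℤ_[3]) ^ k ∣ (n : ℤ_[3])) : 3 ^ k ∣ n := by
  have h2 : ((3 : ℕ) : ℤ_[3]) ^ k ∣ ((n : ℤ) : ℤ_[3]) := by exact_mod_cast h
  rw [← Ideal.mem_span_singleton, ← PadicInt.norm_le_pow_iff_mem_span_pow,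
    PadicInt.norm_int_le_pow_iff_dvd] at h2
  exact_mod_cast h2

lemma unit_iff (x : ℤ_[3]) : IsUnit x ↔ ¬ (3 : ℤ_[3]) ∣ x := by
  constructor
  · intro h h3
    exact p3.not_isUnit (isUnit_of_dvd_unit h3 h)
  · intro h
    by_contra hx
    apply h
    have : x ∈ IsLocalRing.maximalIdeal ℤ_[3] := hx
    rw [PadicInt.maximalIdeal_eq_span_p, Ideal.mem_span_singleton] at this
    exact_mod_cast this

lemma tri3 (c u v : ℤ_[3]) (hu : ¬ (3 : ℤ_[3]) ∣ u) (hv : ¬ (3 : ℤ_[3]) ∣ v)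
    (huv : ¬ (3 : ℤ_[3]) ∣ u + v) :
    (3 : ℤ_[3]) ∣ c ∨ (3 : ℤ_[3]) ∣ c + u ∨ (3 : ℤ_[3]) ∣ c + u + v := by
  obtain ⟨c', hc | hc | hc⟩ := tri c
  · left; exact ⟨_, hc⟩
  all_goals
    obtain ⟨u', h | h | h⟩ := tri u
    · exact absurd ⟨_, h⟩ hu
    all_goals
      obtain ⟨v', h' | h' | h'⟩ := tri v
      · exact absurd ⟨_, h'⟩ hv
      all_goals
        first
        | exact absurd ⟨u' + v' + 1, by rw [h, h']; ring1⟩ huv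
        | exact Or.inr (Or.inl ⟨c' + u' + 1, by rw [hc, h]; ring1⟩)
        | exact Or.inr (Or.inr ⟨c' + u' + v' + 1, by rw [hc, h, h']; ring1⟩)
        | exact Or.inr (Or.inr ⟨c' + u' + v' + 2, by rw [hc, h, h']; ring1⟩)

/-- `x` is at exact distance `3^-(l+1)` of `ε`. -/
def P (l : ℕ) (ε x : ℤ_[3]) : Prop := ∃ u, ¬ (3 : ℤ_[3]) ∣ u ∧ x = ε + 3 ^ (l + 1) * u

lemma P.congr {l : ℕ} {ε x y : ℤ_[3]} (h : P l ε x) (hy : (3 : ℤ_[3]) ^ (l + 2) ∣ y - x) :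
    P l ε y := by
  obtain ⟨u, hu, rfl⟩ := h
  obtain ⟨v, hv⟩ := hy
  refine ⟨u + 3 * v, fun h => hu ?_, by linear_combination hv⟩
  exact (dvd_add_left (dvd_mul_right 3 v)).1 h

lemma P.pow {l : ℕ} {ε x : ℤ_[3]} (hε : ε = 1 ∨ ε = -1) (h : P l ε x) (s q : ℕ)
    (hq : ¬ 3 ∣ q) (he : Even (3 ^ s * q)) :
    ∃ v, ¬ (3 : ℤ_[3]) ∣ v ∧ x ^ (3 ^ s * q) = 1 + 3 ^ (l + s + 1) * v := by
  obtain ⟨u, hu, rfl⟩ := h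
  have key : ∀ u : ℤ_[3], ¬ (3 : ℤ_[3]) ∣ u →
      ∃ v, ¬ (3 : ℤ_[3]) ∣ v ∧ (1 + 3 ^ (l + 1) * u) ^ (3 ^ s * q) = 1 + 3 ^ (l + s + 1) * v := by
    intro u hu
    obtain ⟨c, hc⟩ := pow_lte l u s
    obtain ⟨d, hd⟩ := pow_lin (l + s) (u + 3 * c) q
    refine ⟨_, ?_, by rw [pow_mul, hc, hd]⟩
    intro h
    have h1 := (dvd_add_left (dvd_mul_right 3 d)).1 h
    rcases p3.dvd_or_dvd h1 with h2 | h2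
    · have := dvd_nat 1 q (by simpa using h2)
      exact hq (by simpa using this)
    · exact hu ((dvd_add_left (dvd_mul_right 3 c)).1 h2)
  rcases hε with rfl | rfl
  · exact key u hu
  · obtain ⟨v, hv, hv'⟩ := key (-u) (by rwa [dvd_neg])
    refine ⟨v, hv, ?_⟩
    rw [← hv', ← he.neg_pow]
    congr 1; ring

lemma P.unit {l : ℕ} {ε x : ℤ_[3]} (hε : ε = 1 ∨ ε = -1) (h : P l ε x) : IsUnit x := by
  obtain ⟨u, hu, rfl⟩ := h
  rw [unit_iff]
  intro h
  have h1 : (3 : ℤ_[3]) ∣ ε := by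
    refine (dvd_add_left ?_).1 h
    rw [pow_succ]; exact ⟨3 ^ l * u, by ring⟩
  rcases hε with rfl | rfl
  · exact not1 h1
  · exact not1 ((dvd_neg).1 h1)

/-- exact displacement -/
lemma step {m t : ℕ} (hodd : m % 2 = 1) (r : ℕ) (hr : ¬ 3 ∣ r)
    (hmt : m ^ 2 = 1 + 3 ^ (t + 1) * r) (i : ℕ) (hi : ¬ 3 ∣ i) (j : ℕ)
    {l : ℕ} {ε x : ℤ_[3]} (hε : ε = 1 ∨ ε = -1) (h : P l ε x) :
    ∃ v, ¬ (3 : ℤ_[3]) ∣ v ∧ x ^ m ^ (2 * 3 ^ j * i) = x + 3 ^ (t + 1 + l + 1 + j) * v := by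
  obtain ⟨c, hc⟩ := pow_lte t r j
  obtain ⟨d, hd⟩ := pow_lin (t + j) (r + 3 * c) i
  set q := (i : ℕ) * (r + 3 * c) + 3 * d with hq
  have hmm : m ^ (2 * 3 ^ j * i) = 3 ^ (t + j + 1) * q + 1 := by
    rw [pow_mul, pow_mul, hmt, hc, hd]; simp only [Nat.cast_id]; rw [hq]; ring
  have hq3 : ¬ 3 ∣ q := by
    intro h
    have h1 := (Nat.dvd_add_left (dvd_mul_right 3 d)).1 h
    rcases (Nat.prime_three.dvd_mul).1 h1 with h2 | h2
    · exact hi h2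
    · exact hr ((Nat.dvd_add_left (dvd_mul_right 3 c)).1 h2)
  have he : Even (3 ^ (t + j + 1) * q) := by
    have : Odd (m ^ (2 * 3 ^ j * i)) := (Nat.odd_iff.2 hodd).pow
    rw [hmm] at this
    by_contra h'
    rw [Nat.not_even_iff_odd] at h'
    exact (Nat.not_even_iff_odd.2 this) h'.add_one
  obtain ⟨v, hv, hv'⟩ := h.pow hε (t + j + 1) q hq3 he
  refine ⟨v * x, ?_, ?_⟩
  · intro h'
    rcases p3.dvd_or_dvd h' with h2 | h2
    · exact hv h2
    · exact (unit_iff x).1 (h.unit hε) h2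
  · rw [hmm, pow_succ, hv', show t + 1 + l + 1 + j = l + (t + j + 1) + 1 by ring]; ring

lemma dense {m t : ℕ} (hodd : m % 2 = 1) (r : ℕ) (hr : ¬ 3 ∣ r)
    (hmt : m ^ 2 = 1 + 3 ^ (t + 1) * r)
    {l : ℕ} {ε x y : ℤ_[3]} (hε : ε = 1 ∨ ε = -1) (hy : P l ε y)
    (hxy : (3 : ℤ_[3]) ^ (t + 1 + l + 1) ∣ x - y) (j : ℕ) :
    ∃ n : ℕ, (3 : ℤ_[3]) ^ (t + 1 + l + 1 + j) ∣ x ^ m ^ n - y := by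
  induction j with
  | zero => exact ⟨0, by simpa using hxy⟩
  | succ j ih =>
    obtain ⟨n, c, hc⟩ := ih
    have near : ∀ w : ℤ_[3], (3 : ℤ_[3]) ^ (t + 1 + l + 1 + j) ∣ w - y → P l ε w := fun w hw =>
      hy.congr ((pow_dvd_pow _ (by omega)).trans hw)
    set z := x ^ m ^ n with hz
    have hPz := near z ⟨c, hc⟩
    obtain ⟨u, hu, hu'⟩ := step hodd r hr hmt 1 (by norm_num) j hε hPz
    obtain ⟨w, hw, hw'⟩ := step hodd r hr hmt 2 (by norm_num) j hε hPz
    have hPz1 := near (z ^ m ^ (2 * 3 ^ j * 1)) ⟨c + u, by rw [hu']; linear_combination hc⟩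
    obtain ⟨v, hv, hv'⟩ := step hodd r hr hmt 1 (by norm_num) j hε hPz1
    have e2 : z ^ m ^ (2 * 3 ^ j * 2) = (z ^ m ^ (2 * 3 ^ j * 1)) ^ m ^ (2 * 3 ^ j * 1) := by
      rw [← pow_mul z, ← pow_add m]; congr 2; ring
    have hwuv : w = u + v := by
      have h3 : (3 : ℤ_[3]) ^ (t + 1 + l + 1 + j) ≠ 0 := pow_ne_zero _ p3.ne_zero
      apply mul_left_cancel₀ h3
      rw [hv', hu', hw'] at e2
      linear_combination e2
    rw [hwuv] at hw
    have fin : ∀ i, z ^ m ^ i = x ^ m ^ (n + i) := fun i => by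
      rw [hz, ← pow_mul, ← pow_add]
    rcases tri3 c u v hu hv hw with ⟨d, hd⟩ | ⟨d, hd⟩ | ⟨d, hd⟩
    · exact ⟨n, d, by rw [← hz, hc, hd]; ring⟩
    · refine ⟨n + 2 * 3 ^ j * 1, d, ?_⟩
      rw [← fin, hu']
      linear_combination hc + 3 ^ (t + 1 + l + 1 + j) * hd
    · refine ⟨n + 2 * 3 ^ j * 2, d, ?_⟩
      rw [← fin, e2, hv', hu']
      linear_combination hc + 3 ^ (t + 1 + l + 1 + j) * hd

lemma P.inv {l : ℕ} {ε u z w : ℤ_[3]} (hε : ε = 1 ∨ ε = -1) (h : z = ε + 3 ^ (l + 1) * u)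
    (hzw : z * w = 1) :
    ∃ e, w = ε + 3 ^ (l + 1) * (3 * e - u) := by
  have h2 : ε * ε = 1 := by rcases hε with rfl | rfl <;> ring
  refine ⟨w * 3 ^ l * u * u, ?_⟩
  have h3 : w * ε = 1 - 3 ^ (l + 1) * u * w := by rw [h] at hzw; linear_combination hzw
  have h4 : w = ε - 3 ^ (l + 1) * u * (ε * w) := by
    linear_combination ε * h3 - w * h2
  linear_combination h4 - 3 ^ (l + 1) * u * h3

lemma uniq {l l' : ℕ} {ε ε' u u' z : ℤ_[3]} (hε : ε = 1 ∨ ε = -1) (hε' : ε' = 1 ∨ ε' = -1)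
    (hu : ¬ (3 : ℤ_[3]) ∣ u) (hu' : ¬ (3 : ℤ_[3]) ∣ u')
    (h : z = ε + 3 ^ (l + 1) * u) (h' : z = ε' + 3 ^ (l' + 1) * u') :
    l = l' ∧ ε = ε' ∧ u = u' := by
  have e : ε = ε' := by
    have hd : (3 : ℤ_[3]) ∣ ε - ε' := ⟨3 ^ l' * u' - 3 ^ l * u, by linear_combination h' - h⟩
    rcases hε with rfl | rfl <;> rcases hε' with rfl | rfl
    · rfl
    · exfalso; apply not2; convert hd using 1; norm_num
    · exfalso; apply not2; rw [← dvd_neg]; convert hd using 1; norm_num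
    · rfl
  subst e
  have h3 : (3 : ℤ_[3]) ^ (l + 1) * u = 3 ^ (l' + 1) * u' := by linear_combination h' - h
  have hl : l = l' := by
    rcases lt_trichotomy l l' with hl | hl | hl
    · exfalso
      obtain ⟨k, rfl⟩ := Nat.exists_eq_add_of_lt hl
      apply hu
      refine ⟨3 ^ k * u', mul_left_cancel₀ (pow_ne_zero (l + 1) p3.ne_zero) ?_⟩
      rw [h3]; ring
    · exact hl
    · exfalso
      obtain ⟨k, rfl⟩ := Nat.exists_eq_add_of_lt hl
      apply hu'
      refine ⟨3 ^ k * u, mul_left_cancel₀ (pow_ne_zero (l' + 1) p3.ne_zero) ?_⟩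
      rw [← h3]; ring
  subst hl
  exact ⟨rfl, rfl, mul_left_cancel₀ (pow_ne_zero (l + 1) p3.ne_zero) h3⟩

/-- the point `z` is in the first ball -/
def Q (s l a : ℕ) (ε z : ℤ_[3]) : Prop :=
  (3 : ℤ_[3]) ^ (s + 1 + l + 1) ∣ z - (ε + 3 ^ (l + 1) + 3 ^ (l + 2) * (a : ℤ_[3]))

lemma not13 (e : ℤ_[3]) : ¬ (3 : ℤ_[3]) ∣ 1 + 3 * e := fun h =>
  not1 ((dvd_add_left (dvd_mul_right 3 e)).1 h)

lemma Q.form {s l a : ℕ} {ε z : ℤ_[3]} (h : Q s l a ε z) :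
    ∃ e, z = ε + 3 ^ (l + 1) * (1 + 3 * (a + 3 ^ s * e)) := by
  obtain ⟨e, he⟩ := h
  exact ⟨e, by linear_combination he⟩

lemma Q.uniq {s l a l' a' : ℕ} {ε ε' z : ℤ_[3]} (hε : ε = 1 ∨ ε = -1) (hε' : ε' = 1 ∨ ε' = -1)
    (ha : a < 3 ^ s) (ha' : a' < 3 ^ s)
    (h : Q s l a ε z) (h' : Q s l' a' ε' z) : (l, a, ε) = (l', a', ε') := by
  obtain ⟨e, he⟩ := h.form
  obtain ⟨e', he'⟩ := h'.form
  obtain ⟨rfl, rfl, h3⟩ := MZ3.uniq hε hε' (not13 _) (not13 _) he he'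
  have h4 : (a : ℤ_[3]) + 3 ^ s * e = a' + 3 ^ s * e' := by
    apply mul_left_cancel₀ p3.ne_zero
    linear_combination h3
  have aux : ∀ (b b' : ℕ) (f f' : ℤ_[3]), b < 3 ^ s → b' < 3 ^ s →
      (b : ℤ_[3]) + 3 ^ s * f = b' + 3 ^ s * f' → b ≤ b' := by
    intro b b' f f' hb hb' hh
    by_contra hlt
    have h5 := dvd_nat s (b - b') ⟨f' - f, by
      rw [Nat.cast_sub (by omega)]; linear_combination hh⟩
    have := Nat.le_of_dvd (by omega) h5
    omega
  have := le_antisymm (aux _ _ _ _ ha ha' h4) (aux _ _ _ _ ha' ha h4.symm)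
  rw [this]

lemma Q.cross {s l a l' a' : ℕ} {ε ε' z w : ℤ_[3]} (hε : ε = 1 ∨ ε = -1)
    (hε' : ε' = 1 ∨ ε' = -1) (hzw : z * w = 1)
    (h : Q s l a ε z) (h' : Q s l' a' ε' w) : False := by
  obtain ⟨e, he⟩ := h.form
  obtain ⟨e', he'⟩ := h'.form
  obtain ⟨d, hd⟩ := P.inv hε he hzw
  have hn : ¬ (3 : ℤ_[3]) ∣ 3 * d - (1 + 3 * (a + 3 ^ s * e)) := fun h =>
    not13 _ ((dvd_sub_right (dvd_mul_right 3 d)).1 h)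
  obtain ⟨-, -, h3⟩ := MZ3.uniq hε hε' hn (not13 _) hd he'
  apply not2
  exact ⟨d - (a + 3 ^ s * e) - (a' + 3 ^ s * e'), by linear_combination -h3⟩

lemma Q.P {s l a : ℕ} {ε z : ℤ_[3]} (h : Q s l a ε z) : P l ε z := by
  obtain ⟨e, he⟩ := h.form
  exact ⟨_, not13 _, he⟩

lemma exQ (s l : ℕ) (ε e z : ℤ_[3]) (h : z = ε + 3 ^ (l + 1) * (1 + 3 * e)) :
    ∃ a < 3 ^ s, Q s l a ε z := by
  refine ⟨e.appr s, PadicInt.appr_lt e s, ?_⟩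
  have := PadicInt.appr_spec s e
  rw [Ideal.mem_span_singleton] at this
  obtain ⟨f, hf⟩ := this
  push_cast at hf
  exact ⟨f, by rw [h]; linear_combination 3 ^ (l + 2) * hf⟩

lemma exP (x : ℤ_[3]) (h : ¬ (3 : ℤ_[3]) ∣ x) (h1 : x ≠ 1) (h2 : x ≠ -1) :
    ∃ l ε, (ε = 1 ∨ ε = -1) ∧ P l ε x := by
  have key : ∀ ε : ℤ_[3], x ≠ ε → (3 : ℤ_[3]) ∣ x - ε → ∃ l, P l ε x := by
    intro ε hne hd
    have hfin : FiniteMultiplicity (3 : ℤ_[3]) (x - ε) :=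
      FiniteMultiplicity.of_prime_left p3 (sub_ne_zero.2 hne)
    obtain ⟨c, hc, hc'⟩ := hfin.exists_eq_pow_mul_and_not_dvd
    have hpos : multiplicity (3 : ℤ_[3]) (x - ε) ≠ 0 := by
      intro h0
      rw [h0, pow_zero, one_mul] at hc
      rw [hc] at hd
      exact hc' hd
    obtain ⟨l, hl⟩ := Nat.exists_eq_succ_of_ne_zero hpos
    refine ⟨l, c, hc', ?_⟩
    rw [hl, Nat.succ_eq_add_one] at hc
    linear_combination hc
  obtain ⟨v, hv | hv | hv⟩ := tri x
  · exact absurd ⟨_, hv⟩ h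
  · obtain ⟨l, hl⟩ := key 1 h1 ⟨v, by rw [hv]; ring⟩
    exact ⟨l, 1, Or.inl rfl, hl⟩
  · obtain ⟨l, hl⟩ := key (-1) h2 ⟨v + 1, by rw [hv]; ring⟩
    exact ⟨l, -1, Or.inr rfl, hl⟩

lemma clopen (k : ℕ) (c : ℤ_[3]) : IsClopen {x : ℤ_[3] | (3 : ℤ_[3]) ^ k ∣ x - c} := by
  have : {x : ℤ_[3] | (3 : ℤ_[3]) ^ k ∣ x - c} = Metric.closedBall c ((3 : ℝ) ^ (-k : ℤ)) := by
    ext x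
    rw [Metric.mem_closedBall, dist_eq_norm]
    have := PadicInt.norm_le_pow_iff_mem_span_pow (x - c) k
    rw [Ideal.mem_span_singleton] at this
    push_cast at this
    exact this.symm
  rw [this]
  exact IsUltrametricDist.isClopen_closedBall c (by positivity)

lemma mem_cl (y : ℤ_[3]) (S : Set ℤ_[3]) (k : ℕ)
    (h : ∀ j : ℕ, ∃ z ∈ S, (3 : ℤ_[3]) ^ (k + j) ∣ z - y) : y ∈ closure S := by
  rw [Metric.mem_closure_iff]
  intro ε hε
  obtain ⟨j, hj⟩ := PadicInt.exists_pow_neg_lt 3 hε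
  obtain ⟨z, hz, hd⟩ := h j
  refine ⟨z, hz, ?_⟩
  rw [dist_comm, dist_eq_norm]
  refine lt_of_le_of_lt ?_ hj
  rw [PadicInt.norm_le_pow_iff_mem_span_pow, Ideal.mem_span_singleton]
  push_cast
  exact (pow_dvd_pow _ (by omega)).trans hd

end MZ3

/-- Minimal decomposition for `x ↦ x^m` on `ℤ_3` with `m ≡ 5 (mod 6)`:
with `x₀ = ε + 3^(l+1) + 3^(l+2)a` (a 3-adic unit), the sets
`M_{l,a,ε} = (x₀ + 3^(t+l+1)ℤ_3) ∪ (x₀⁻¹ + 3^(t+l+1)ℤ_3)` are pairwise disjoint clopen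
minimal components, and together with `{1, -1}` they cover exactly the 3-adic units. -/
theorem monomial_Z3_five_mod_six_decomposition (m : ℕ) (hm : 2 ≤ m) (hmod : m % 6 = 5)
    (t : ℕ) (ht : t = padicValNat 3 (m + 1))
    (x₀ : ℕ → ℕ → ℤ_[3] → ℤ_[3])
    (hx₀ : ∀ l a ε, x₀ l a ε = ε + 3 ^ (l + 1) + 3 ^ (l + 2) * (a : ℤ_[3]))
    (M : ℕ → ℕ → ℤ_[3] → Set ℤ_[3])
    (hM : ∀ l a ε, M l a ε =
      {x : ℤ_[3] | (3 : ℤ_[3]) ^ (t + l + 1) ∣ x - x₀ l a ε} ∪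
      {x : ℤ_[3] | (3 : ℤ_[3]) ^ (t + l + 1) ∣ x - Ring.inverse (x₀ l a ε)}) :
    (∀ l a (ε : ℤ_[3]), a < 3 ^ (t - 1) → (ε = 1 ∨ ε = -1) → IsUnit (x₀ l a ε)) ∧
    (∀ l a (ε : ℤ_[3]) l' a' (ε' : ℤ_[3]),
      a < 3 ^ (t - 1) → a' < 3 ^ (t - 1) → (ε = 1 ∨ ε = -1) → (ε' = 1 ∨ ε' = -1) →
      (l, a, ε) ≠ (l', a', ε') → Disjoint (M l a ε) (M l' a' ε')) ∧
    (∀ l a (ε : ℤ_[3]), a < 3 ^ (t - 1) → (ε = 1 ∨ ε = -1) →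
      IsClopen (M l a ε) ∧
      (∀ x ∈ M l a ε, x ^ m ∈ M l a ε) ∧
      (∀ x ∈ M l a ε, M l a ε ⊆ closure (Set.range fun n : ℕ => x ^ m ^ n))) ∧
    ((⋃ l : ℕ, ⋃ a ∈ Finset.range (3 ^ (t - 1)), ⋃ ε ∈ ({1, -1} : Set ℤ_[3]), M l a ε)
        ∪ {1, -1} = {x : ℤ_[3] | ¬ (3 : ℤ_[3]) ∣ x}) := by
  have hdvd : (3 : ℕ) ∣ m + 1 := by omega
  have hm1 : m + 1 ≠ 0 := by omega
  obtain ⟨s, rfl⟩ : ∃ s, t = s + 1 := by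
    have : 1 ≤ t := by
      rw [ht]; exact one_le_padicValNat_of_dvd hm1 hdvd
    exact ⟨t - 1, by omega⟩
  obtain ⟨r₀, hr₀⟩ : 3 ^ (s + 1) ∣ m + 1 := by
    rw [ht]; exact pow_padicValNat_dvd
  have hr₀3 : ¬ 3 ∣ r₀ := by
    rintro ⟨q, rfl⟩
    have h := (padicValNat_dvd_iff_le (p := 3) (n := s + 1 + 1) hm1).1 ⟨q, by rw [hr₀]; ring⟩
    omega
  obtain ⟨r, hr3, hmt⟩ : ∃ r, ¬ 3 ∣ r ∧ m ^ 2 = 1 + 3 ^ (s + 1) * r := by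
    refine ⟨r₀ * (m - 1), ?_, ?_⟩
    · intro h
      rcases (Nat.prime_three.dvd_mul).1 h with h2 | h2
      · exact hr₀3 h2
      · omega
    · rw [← mul_assoc, ← hr₀]
      obtain ⟨n, rfl⟩ : ∃ n, m = n + 1 := ⟨m - 1, by omega⟩
      simp only [Nat.add_sub_cancel]; ring
  have hodd : m % 2 = 1 := by omega
  simp only [Nat.add_sub_cancel]
  have hQ0 : ∀ l a ε, MZ3.Q s l a ε (x₀ l a ε) := by
    intro l a ε
    unfold MZ3.Q
    rw [hx₀, sub_self]; exact dvd_zero _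
  have hunit : ∀ l a (ε : ℤ_[3]), (ε = 1 ∨ ε = -1) → IsUnit (x₀ l a ε) := fun l a ε hε =>
    (hQ0 l a ε).P.unit hε
  -- description of `M`
  have hQ : ∀ l a ε z, (3 : ℤ_[3]) ^ (s + 1 + l + 1) ∣ z - x₀ l a ε ↔ MZ3.Q s l a ε z := by
    intro l a ε z
    unfold MZ3.Q
    rw [hx₀]
  have hinv : ∀ l a (ε z w : ℤ_[3]), (ε = 1 ∨ ε = -1) → z * w = 1 →
      ((3 : ℤ_[3]) ^ (s + 1 + l + 1) ∣ z - Ring.inverse (x₀ l a ε) ↔ MZ3.Q s l a ε w) := by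
    intro l a ε z w hε hzw
    have hi := Ring.mul_inverse_cancel _ (hunit l a ε hε)
    rw [← hQ]
    set x := x₀ l a ε
    set y := Ring.inverse x
    constructor
    · rintro ⟨c, hc⟩
      exact ⟨-(w * x * c), by linear_combination (-(w * x)) * hc + x * hzw - w * hi⟩
    · rintro ⟨c, hc⟩
      exact ⟨-(z * y * c), by linear_combination (-(z * y)) * hc + y * hzw - z * hi⟩
  have hMem : ∀ l a (ε z w : ℤ_[3]), (ε = 1 ∨ ε = -1) → z * w = 1 →
      (z ∈ M l a ε ↔ MZ3.Q s l a ε z ∨ MZ3.Q s l a ε w) := by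
    intro l a ε z w hε hzw
    rw [hM, Set.mem_union, Set.mem_setOf_eq, Set.mem_setOf_eq, hQ, hinv l a ε z w hε hzw]
  have hPinv : ∀ l a (ε : ℤ_[3]), (ε = 1 ∨ ε = -1) → MZ3.P l ε (Ring.inverse (x₀ l a ε)) := by
    intro l a ε hε
    have hi := Ring.mul_inverse_cancel _ (hunit l a ε hε)
    obtain ⟨u, hu, hu'⟩ := (hQ0 l a ε).P
    obtain ⟨e, he⟩ := MZ3.P.inv hε hu' hi
    exact ⟨_, fun h => hu ((dvd_sub_right (dvd_mul_right 3 e)).1 h), he⟩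
  have hMP : ∀ l a (ε z : ℤ_[3]), (ε = 1 ∨ ε = -1) → z ∈ M l a ε → MZ3.P l ε z := by
    intro l a ε z hε hz
    rw [hM] at hz
    rcases hz with hz | hz
    · exact (hQ0 l a ε).P.congr ((pow_dvd_pow _ (by omega)).trans hz)
    · exact (hPinv l a ε hε).congr ((pow_dvd_pow _ (by omega)).trans hz)
  -- the action of the map on the two balls
  have hswap : ∀ l a (ε z : ℤ_[3]), (ε = 1 ∨ ε = -1) →
      ((3 : ℤ_[3]) ^ (s + 1 + l + 1) ∣ z - x₀ l a ε →
        (3 : ℤ_[3]) ^ (s + 1 + l + 1) ∣ z ^ m - Ring.inverse (x₀ l a ε)) ∧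
      ((3 : ℤ_[3]) ^ (s + 1 + l + 1) ∣ z - Ring.inverse (x₀ l a ε) →
        (3 : ℤ_[3]) ^ (s + 1 + l + 1) ∣ z ^ m - x₀ l a ε) := by
    intro l a ε z hε
    have hi := Ring.mul_inverse_cancel _ (hunit l a ε hε)
    obtain ⟨v, -, hv⟩ := (hQ0 l a ε).P.pow hε (s + 1) r₀ hr₀3 (by
      rw [← hr₀]; exact Nat.even_iff.2 (by omega))
    rw [← hr₀, show l + (s + 1) + 1 = s + 1 + l + 1 by ring] at hv
    set x := x₀ l a ε
    set y := Ring.inverse x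
    have hy : x ^ m * y ^ m = 1 := by rw [← mul_pow, hi, one_pow]
    rw [pow_succ] at hv
    constructor
    · intro h
      have h1 := h.trans (sub_dvd_pow_sub_pow z x m)
      have e : z ^ m - y = (z ^ m - x ^ m) + 3 ^ (s + 1 + l + 1) * (v * y) := by
        linear_combination y * hv - x ^ m * hi
      rw [e]
      exact dvd_add h1 (dvd_mul_right _ _)
    · intro h
      have h1 := h.trans (sub_dvd_pow_sub_pow z y m)
      have e : z ^ m - x = (z ^ m - y ^ m) + 3 ^ (s + 1 + l + 1) * (-(v * y ^ m)) := by
        linear_combination (-(y ^ m)) * hv + x * hy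
      rw [e]
      exact dvd_add h1 (dvd_mul_right _ _)
  refine ⟨fun l a ε _ hε => hunit l a ε hε, ?_, ?_, ?_⟩
  · intro l a ε l' a' ε' ha ha' hε hε' hne
    rw [Set.disjoint_left]
    intro z hz hz'
    obtain ⟨w, hzw⟩ := ((hMP l a ε z hε hz).unit hε).exists_right_inv
    have hwz : w * z = 1 := by rw [mul_comm]; exact hzw
    rw [hMem _ _ _ _ _ hε hzw] at hz
    rw [hMem _ _ _ _ _ hε' hzw] at hz'
    rcases hz with hz | hz <;> rcases hz' with hz' | hz'
    · exact hne (hz.uniq hε hε' ha ha' hz')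
    · exact hz.cross hε hε' hzw hz'
    · exact hz.cross hε hε' hwz hz'
    · exact hne (hz.uniq hε hε' ha ha' hz')
  · intro l a ε ha hε
    refine ⟨?_, ?_, ?_⟩
    · rw [hM]
      exact (MZ3.clopen _ _).union (MZ3.clopen _ _)
    · intro x hx
      rw [hM] at hx ⊢
      rcases hx with hx | hx
      · exact Or.inr ((hswap l a ε x hε).1 hx)
      · exact Or.inl ((hswap l a ε x hε).2 hx)
    · intro x hx y hy
      have hPy := hMP l a ε y hε hy
      have h0 : (3 : ℤ_[3]) ^ (s + 1 + l + 1) ∣ x - y ∨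
          (3 : ℤ_[3]) ^ (s + 1 + l + 1) ∣ x ^ m - y := by
        rw [hM] at hx hy
        rcases hx with hx | hx <;> rcases hy with hy | hy
        · left; simpa using dvd_sub hx hy
        · right; simpa using dvd_sub ((hswap l a ε x hε).1 hx) hy
        · right; simpa using dvd_sub ((hswap l a ε x hε).2 hx) hy
        · left; simpa using dvd_sub hx hy
      apply MZ3.mem_cl y _ (s + 1 + l + 1)
      intro j
      rcases h0 with h0 | h0
      · obtain ⟨n, hn⟩ := MZ3.dense hodd r hr3 hmt hε hPy h0 j
        exact ⟨_, ⟨n, rfl⟩, hn⟩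
      · obtain ⟨n, hn⟩ := MZ3.dense hodd r hr3 hmt hε hPy h0 j
        refine ⟨_, ⟨n + 1, rfl⟩, ?_⟩
        simp only [pow_succ' m n, pow_mul]
        exact hn
  · ext x
    simp only [Set.mem_union, Set.mem_iUnion, Finset.mem_range, Set.mem_setOf_eq, exists_prop,
      Set.mem_insert_iff, Set.mem_singleton_iff]
    constructor
    · rintro (⟨l, a, ha, ε, hε, hx⟩ | rfl | rfl)
      · exact (MZ3.unit_iff x).1 ((hMP l a ε x hε hx).unit hε)
      · exact MZ3.not1
      · rw [dvd_neg]; exact MZ3.not1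
    · intro hx
      by_cases h1 : x = 1
      · exact Or.inr (Or.inl h1)
      by_cases h2 : x = -1
      · exact Or.inr (Or.inr h2)
      left
      obtain ⟨l, ε, hε, u, hu, hxu⟩ := MZ3.exP x hx h1 h2
      obtain ⟨w, hxw⟩ := ((MZ3.unit_iff x).2 hx).exists_right_inv
      obtain ⟨v, hv | hv | hv⟩ := MZ3.tri u
      · exact absurd ⟨_, hv⟩ hu
      · obtain ⟨a, ha, hq⟩ := MZ3.exQ s l ε v x (by rw [hxu, hv]; ring)
        exact ⟨l, a, ha, ε, hε, (hMem l a ε x w hε hxw).2 (Or.inl hq)⟩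
      · obtain ⟨e, he⟩ := MZ3.P.inv hε hxu hxw
        obtain ⟨a, ha, hq⟩ := MZ3.exQ s l ε (e - v - 1) w (by rw [he, hv]; ring)
        exact ⟨l, a, ha, ε, hε, (hMem l a ε x w hε hxw).2 (Or.inr hq)⟩
end

section
/- Let m ≥ 2 be an integer with m ≡ 11 (mod 20), let f(x) = x^m on ℤ_5, let t = ν_5(m − 1), and let 𝕚 be the unique element of ℤ_5 with 𝕚² = −1 and 𝕚 − 2 ∈ 5ℤ_5. For each integer l ≥ 0, each i ∈ {1, 2, 3, 4}, and each a ∈ {0, 1, …, 5^(t−1) − 1}, set M_{l,a,i,1} = 1 + 5^(l+1)·i + 5^(l+2)·a + 5^(t+l+1)ℤ_5, M_{l,a,i,2} = −1 + 5^(l+1)·i + 5^(l+2)·a + 5^(t+l+1)ℤ_5, and M_{l,a,i,3} = (𝕚 + 5^(l+1)·i + 5^(l+2)·a + 5^(t+l+1)ℤ_5) ∪ (−𝕚 − 5^(l+1)·i − 5^(l+2)·a + 5^(t+l+1)ℤ_5). Then these sets are pairwise disjoint clopen subsets of ℤ_5, each is a minimal component of f (f-invariant with every forward orbit dense in it), and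 their union together with the periodic-point set {1, −1, 𝕚, −𝕚} equals the set of 5-adic units ℤ_5 \ 5ℤ_5; moreover 1, −1 are fixed points of f while f(𝕚) = −𝕚 and f(−𝕚) = 𝕚. -/
open Filter Topology

instance : Fact (Nat.Prime 5) := ⟨by norm_num⟩

namespace MonoZ5

lemma prime5 : Prime (5 : ℤ_[5]) := by
  have := PadicInt.prime_p (p := 5)
  exact_mod_cast this

lemma dvd_nat (k n : ℕ) : (5 : ℤ_[5]) ^ k ∣ (n : ℤ_[5]) ↔ 5 ^ k ∣ n := by
  have := PadicInt.pow_p_dvd_int_iff (p := 5) k (n : ℤ)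
  rw [← Int.natCast_dvd_natCast]
  push_cast at this ⊢
  exact this

lemma dvd_nat1 (n : ℕ) : (5 : ℤ_[5]) ∣ (n : ℤ_[5]) ↔ 5 ∣ n := by
  simpa using dvd_nat 1 n

/-- `y - 1` has valuation exactly `k`. -/
def P (k : ℕ) (y : ℤ_[5]) : Prop := ∃ w : ℤ_[5], ¬ (5 : ℤ_[5]) ∣ w ∧ y = 1 + 5 ^ k * w

lemma one_add_pow (z : ℤ_[5]) (n : ℕ) : ∃ r, (1 + z) ^ n = 1 + n * z + z ^ 2 * r := by
  induction n with
  | zero => exact ⟨0, by simp⟩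
  | succ n ih =>
    obtain ⟨r, hr⟩ := ih
    refine ⟨n + r + z * r, ?_⟩
    rw [pow_succ, hr]; push_cast; ring

lemma P.five {k : ℕ} {y : ℤ_[5]} (hk : 1 ≤ k) (h : P k y) : P (k + 1) (y ^ 5) := by
  obtain ⟨w, hw, rfl⟩ := h
  obtain ⟨k, rfl⟩ := Nat.exists_eq_add_of_le' hk
  refine ⟨w + 5 * (2 * 5 ^ k * w ^ 2 + 2 * 5 ^ (2 * k + 1) * w ^ 3 + 5 ^ (3 * k + 2) * w ^ 4
    + 5 ^ (4 * k + 2) * w ^ 5), ?_, by ring⟩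
  intro h
  exact hw ((dvd_add_left (dvd_mul_right _ _)).1 h)

lemma P.pow_five {k : ℕ} {y : ℤ_[5]} (hk : 1 ≤ k) (h : P k y) (s : ℕ) :
    P (k + s) (y ^ 5 ^ s) := by
  induction s with
  | zero => simpa using h
  | succ s ih => rw [pow_succ, pow_mul, ← add_assoc]; exact ih.five (by omega)

lemma P.pow_cop {k : ℕ} {y : ℤ_[5]} (hk : 1 ≤ k) (h : P k y) {n : ℕ} (hn : ¬ 5 ∣ n) :
    P k (y ^ n) := by
  obtain ⟨w, hw, rfl⟩ := h
  obtain ⟨k, rfl⟩ := Nat.exists_eq_add_of_le' hk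
  obtain ⟨r, hr⟩ := one_add_pow (5 ^ (k + 1) * w) n
  refine ⟨n * w + 5 * (5 ^ k * w ^ 2 * r), ?_, by rw [hr]; ring⟩
  intro h
  have h2 := (dvd_add_left (dvd_mul_right _ _)).1 h
  rcases prime5.dvd_or_dvd h2 with h3 | h3
  · exact hn ((dvd_nat1 n).1 h3)
  · exact hw h3

lemma P.pow {k : ℕ} {y : ℤ_[5]} (hk : 1 ≤ k) (h : P k y) {r g : ℕ} (hn : ¬ 5 ∣ g) :
    P (k + r) (y ^ (5 ^ r * g)) := by
  rw [pow_mul]; exact (h.pow_five hk r).pow_cop (by omega) hn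

lemma P.dvd {k : ℕ} {y : ℤ_[5]} (hk : 1 ≤ k) (h : P k y) : (5 : ℤ_[5]) ∣ y - 1 := by
  obtain ⟨w, hw, rfl⟩ := h
  obtain ⟨k, rfl⟩ := Nat.exists_eq_add_of_le' hk
  exact ⟨5 ^ k * w, by ring⟩

/-- Nat version of `P` for exponents. -/
lemma exp_form {t q : ℕ} (ht : 1 ≤ t) (hq : 1 ≤ q) (h : P t (q : ℤ_[5])) (s : ℕ) :
    ∃ g, ¬ 5 ∣ g ∧ q ^ 5 ^ s = 1 + 5 ^ (t + s) * g := by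
  obtain ⟨w, hw, h1⟩ := h.pow_five ht s
  have hQ : 1 ≤ q ^ 5 ^ s := Nat.one_le_pow _ _ hq
  obtain ⟨d, hd⟩ := Nat.exists_eq_add_of_le hQ
  have h2 : (d : ℤ_[5]) = 5 ^ (t + s) * w := by
    have : ((q ^ 5 ^ s : ℕ) : ℤ_[5]) = 1 + d := by rw [hd]; push_cast; ring
    push_cast at this
    rw [h1] at this
    exact (add_left_cancel this).symm
  obtain ⟨g, rfl⟩ := (dvd_nat (t + s) d).1 ⟨w, h2⟩
  refine ⟨g, ?_, hd⟩
  intro h5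
  apply hw
  have h3 : (g : ℤ_[5]) = w := by
    push_cast at h2
    exact mul_left_cancel₀ (pow_ne_zero _ prime5.ne_zero) h2
  rw [← h3]; exact (dvd_nat1 g).2 h5

lemma pow_sub_aux {K : ℕ} {x y : ℤ_[5]} {Q : ℕ} (h : (5 : ℤ_[5]) ^ K ∣ x - y)
    (hx : (5 : ℤ_[5]) ∣ x - 1) (hy : (5 : ℤ_[5]) ∣ y - 1) (hQ : (5 : ℤ_[5]) ∣ (Q : ℤ_[5]) - 1) :
    (5 : ℤ_[5]) ^ (K + 1) ∣ (x ^ Q - x) - (y ^ Q - y) := by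
  have key : ∃ G, x ^ Q - y ^ Q = (x - y) * G ∧ (5 : ℤ_[5]) ∣ G - Q := by
    clear hQ
    induction Q with
    | zero => exact ⟨0, by simp, by simp⟩
    | succ Q ih =>
      obtain ⟨G, h1, h2⟩ := ih
      refine ⟨x ^ Q + y * G, ?_, ?_⟩
      · linear_combination y * h1
      · have h3 : (5 : ℤ_[5]) ∣ x ^ Q - 1 := hx.trans (by simpa using sub_dvd_pow_sub_pow x 1 Q)
        have : x ^ Q + y * G - ((Q + 1 : ℕ) : ℤ_[5])
          = (x ^ Q - 1) + (y - 1) * G + (G - Q) := by push_cast; ring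
        rw [this]
        exact dvd_add (dvd_add h3 (hy.mul_right _)) h2
  obtain ⟨G, h1, h2⟩ := key
  have : (x ^ Q - x) - (y ^ Q - y) = (x - y) * ((G - Q) + (Q - 1)) := by
    linear_combination h1
  rw [this, pow_succ]
  exact mul_dvd_mul h (dvd_add h2 hQ)

lemma exists_solve (e w : ℤ_[5]) (hw : ¬ (5 : ℤ_[5]) ∣ w) :
    ∃ j : ℕ, (5 : ℤ_[5]) ∣ e + j * w := by
  have hu : IsUnit w := by
    by_contra h
    apply hw
    have := (PadicInt.norm_lt_one_iff_dvd w).1 (PadicInt.mem_nonunits.1 h)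
    exact_mod_cast this
  obtain ⟨v, hv⟩ := hu.exists_right_inv
  obtain ⟨n, -, hn⟩ := PadicInt.exists_mem_range (p := 5) (-e * v)
  rw [PadicInt.maximalIdeal_eq_span_p, Ideal.mem_span_singleton] at hn
  refine ⟨n, ?_⟩
  have : e + n * w = -((-e * v - n) * w) := by linear_combination (-e) * hv
  rw [this, dvd_neg]
  exact (by exact_mod_cast hn : (5 : ℤ_[5]) ∣ (-e * v - n)).mul_right _

lemma dense_aux {k t q : ℕ} (hk : 1 ≤ k) (ht : 1 ≤ t) (hq : 1 ≤ q) (hP : P t (q : ℤ_[5]))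
    {y z : ℤ_[5]} (hy : P k y) (hz : (5 : ℤ_[5]) ^ (k + t) ∣ y - z) (s : ℕ) :
    ∃ n : ℕ, (5 : ℤ_[5]) ^ (k + t + s) ∣ y ^ q ^ n - z := by
  induction s with
  | zero => exact ⟨0, by simpa using hz⟩
  | succ s ih =>
    obtain ⟨n, e, he⟩ := ih
    have hq5 : ¬ 5 ∣ q := by
      intro h
      have h1 := (dvd_nat1 q).2 h
      have h2 := (dvd_sub_right h1).1 (P.dvd ht hP)
      exact prime5.not_isUnit (isUnit_of_dvd_one h2)
    have hy' : P k (y ^ q ^ n) := hy.pow_cop hk (fun h => hq5 (Nat.Prime.dvd_of_dvd_pow (by norm_num) h))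
    generalize hyd : y ^ q ^ n = y' at he hy'
    obtain ⟨g, hg, hQ⟩ := exp_form ht hq hP s
    obtain ⟨w, hw, hyw⟩ := hy'.pow (r := t + s) hk hg
    have hy1 := hy'.dvd hk
    have hQ1 : (5 : ℤ_[5]) ∣ ((q ^ 5 ^ s : ℕ) : ℤ_[5]) - 1 := by
      rw [hQ]; push_cast
      rw [add_sub_cancel_left]
      exact (dvd_pow_self _ (by omega)).mul_right _
    have hstep : (y') ^ (q ^ 5 ^ s) - y' = 5 ^ (k + t + s) * (y' * w) := by
      rw [hQ, pow_add, hyw]; ring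
    set Q := q ^ 5 ^ s
    have hj : ∀ j : ℕ, (5 : ℤ_[5]) ^ (k + t + s + 1) ∣
        y' ^ Q ^ j - (y' + 5 ^ (k + t + s) * (j * (y' * w))) := by
      intro j
      induction j with
      | zero => simp
      | succ j ih =>
        have h1 : (5 : ℤ_[5]) ^ (k + t + s) ∣ y' ^ Q ^ j - y' := by
          have h2 := (pow_dvd_pow (5 : ℤ_[5]) (Nat.le_succ (k + t + s))).trans ih
          have h3 := dvd_add h2 (dvd_mul_right ((5 : ℤ_[5]) ^ (k + t + s)) (j * (y' * w)))
          convert h3 using 1; ring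
        have h2 : (5 : ℤ_[5]) ∣ y' ^ Q ^ j - 1 :=
          hy1.trans (by simpa using sub_dvd_pow_sub_pow y' 1 (Q ^ j))
        have h3 := pow_sub_aux h1 h2 hy1 hQ1
        rw [hstep] at h3
        have h4 := dvd_add h3 ih
        rw [pow_succ Q, pow_mul]
        convert h4 using 1
        push_cast; ring
    have hyw5 : ¬ (5 : ℤ_[5]) ∣ y' * w := by
      intro h
      rcases prime5.dvd_or_dvd h with h | h
      · have h2 := (dvd_sub_right h).1 hy1
        exact prime5.not_isUnit (isUnit_of_dvd_one h2)
      · exact hw h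
    obtain ⟨j, c, hc⟩ := exists_solve e (y' * w) hyw5
    refine ⟨n + 5 ^ s * j, ?_⟩
    have h1 : y ^ q ^ (n + 5 ^ s * j) = y' ^ Q ^ j := by
      rw [pow_add, pow_mul y, hyd, pow_mul q]
    rw [h1]
    have h2 := dvd_add (hj j) (dvd_mul_right ((5 : ℤ_[5]) ^ (k + t + s + 1)) c)
    have h3 : y' ^ Q ^ j - z = y' ^ Q ^ j - (y' + 5 ^ (k + t + s) * (j * (y' * w)))
        + 5 ^ (k + t + s + 1) * c := by
      rw [pow_succ (5 : ℤ_[5]), mul_assoc _ 5 c, ← hc]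
      linear_combination he
    rw [h3]
    exact h2

/-- The ball `c + 5^(l+1) u + 5^(t+l+1) ℤ_5`. -/
def B (t : ℕ) (c : ℤ_[5]) (l : ℕ) (u : ℤ_[5]) : Set ℤ_[5] :=
  {x : ℤ_[5] | (5 : ℤ_[5]) ^ (t + l + 1) ∣ x - (c + 5 ^ (l + 1) * u)}

lemma B_form {t : ℕ} (ht : 1 ≤ t) {c : ℤ_[5]} {l : ℕ} {u x : ℤ_[5]} (hu : ¬ (5 : ℤ_[5]) ∣ u)
    (hx : x ∈ B t c l u) :
    ∃ w, ¬ (5 : ℤ_[5]) ∣ w ∧ (5 : ℤ_[5]) ^ t ∣ w - u ∧ x = c + 5 ^ (l + 1) * w := by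
  obtain ⟨d, hd⟩ := hx
  refine ⟨u + 5 ^ t * d, ?_, ⟨d, by ring⟩, by linear_combination hd⟩
  intro h
  exact hu ((dvd_add_left ((dvd_pow_self _ (by omega)).mul_right _)).1 h)

lemma root_eq {c c' : ℤ_[5]} (hc : c ^ 4 = 1) (hc' : c' ^ 4 = 1) (h : (5 : ℤ_[5]) ∣ c - c') :
    c = c' := by
  have h1 : (c - c') * ((c + c') * (c ^ 2 + c' ^ 2)) = 0 := by linear_combination hc - hc'
  rcases mul_eq_zero.1 h1 with h2 | h2
  · exact sub_eq_zero.1 h2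
  · exfalso
    obtain ⟨d, hd⟩ := h
    obtain rfl : c' = c - 5 * d := by linear_combination -hd
    have h3 : (5 : ℤ_[5]) ∣ 4 := by
      refine ⟨c * (6 * c^2 * d - 20 * c * d ^ 2 + 25 * d ^ 3), ?_⟩
      linear_combination (-4) * hc + c * h2
    have h4 := (dvd_nat1 4).1 (by exact_mod_cast h3)
    omega

lemma B_disj {t : ℕ} (ht : 1 ≤ t) {c c' : ℤ_[5]} {l l' : ℕ} {u u' x : ℤ_[5]}
    (hc : c ^ 4 = 1) (hc' : c' ^ 4 = 1)
    (hu : ¬ (5 : ℤ_[5]) ∣ u) (hu' : ¬ (5 : ℤ_[5]) ∣ u')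
    (hx : x ∈ B t c l u) (hx' : x ∈ B t c' l' u') :
    c = c' ∧ l = l' ∧ (5 : ℤ_[5]) ^ t ∣ u - u' := by
  obtain ⟨w, hw, hwu, h1⟩ := B_form ht hu hx
  obtain ⟨w', hw', hwu', h2⟩ := B_form ht hu' hx'
  have hcc : c = c' := by
    apply root_eq hc hc'
    exact ⟨5 ^ l' * w' - 5 ^ l * w, by linear_combination h2 - h1⟩
  subst hcc
  have h3 : (5 : ℤ_[5]) ^ l * w = 5 ^ l' * w' := by
    apply mul_left_cancel₀ prime5.ne_zero
    linear_combination h2 - h1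
  have hll : l = l' := by
    rcases lt_trichotomy l l' with h | h | h
    · exfalso
      obtain ⟨d, rfl⟩ := Nat.exists_eq_add_of_lt h
      apply hw
      refine ⟨5 ^ d * w', ?_⟩
      apply mul_left_cancel₀ (pow_ne_zero l prime5.ne_zero)
      rw [h3]; ring
    · exact h
    · exfalso
      obtain ⟨d, rfl⟩ := Nat.exists_eq_add_of_lt h
      apply hw'
      refine ⟨5 ^ d * w, ?_⟩
      apply mul_left_cancel₀ (pow_ne_zero l' prime5.ne_zero)
      rw [← h3]; ring
  subst hll
  have h4 := mul_left_cancel₀ (pow_ne_zero l prime5.ne_zero) h3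
  subst h4
  refine ⟨rfl, rfl, ?_⟩
  have := dvd_sub hwu' hwu
  convert this using 1; ring

lemma B_closedBall (t : ℕ) (c : ℤ_[5]) (l : ℕ) (u : ℤ_[5]) :
    B t c l u = Metric.closedBall (c + 5 ^ (l + 1) * u) ((5 : ℝ) ^ (-((t + l + 1 : ℕ) : ℤ))) := by
  ext x
  have := PadicInt.norm_le_pow_iff_mem_span_pow (p := 5) (x - (c + 5 ^ (l + 1) * u)) (t + l + 1)
  rw [Ideal.mem_span_singleton] at this
  rw [Metric.mem_closedBall, dist_eq_norm]
  change (5 : ℤ_[5]) ^ (t + l + 1) ∣ x - (c + 5 ^ (l + 1) * u) ↔ _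
  exact_mod_cast this.symm

lemma B_clopen (t : ℕ) (c : ℤ_[5]) (l : ℕ) (u : ℤ_[5]) : IsClopen (B t c l u) := by
  rw [B_closedBall]
  exact IsUltrametricDist.isClopen_closedBall _ (by positivity)

lemma B_neg {t : ℕ} {c : ℤ_[5]} {l : ℕ} {u x : ℤ_[5]} :
    x ∈ B t (-c) l (-u) ↔ -x ∈ B t c l u := by
  unfold B
  simp only [Set.mem_ofPred_eq]
  rw [← dvd_neg]
  have : -(x - (-c + 5 ^ (l + 1) * -u)) = -x - (c + 5 ^ (l + 1) * u) := by ring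
  rw [this]

lemma B_inv {t : ℕ} {m g : ℕ} (hm : m = 1 + 5 ^ t * g) {c : ℤ_[5]} (hc : c ^ 4 = 1)
    {l : ℕ} {u x : ℤ_[5]} (hx : x ∈ B t c l u) :
    (5 : ℤ_[5]) ^ (t + l + 1) ∣ x ^ m - c ^ (m - 1) * x := by
  obtain ⟨d, hd⟩ := hx
  have hxy : x = c * (1 + 5 ^ (l + 1) * (c ^ 3 * (u + 5 ^ t * d))) := by
    linear_combination hd - (5 ^ (l + 1) * (u + 5 ^ t * d)) * hc
  have key : ∀ s (w : ℤ_[5]), (5 : ℤ_[5]) ^ (s + l + 1) ∣ (1 + 5 ^ (l + 1) * w) ^ 5 ^ s - 1 := by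
    intro s w
    induction s with
    | zero => simp
    | succ s ih =>
      obtain ⟨r, hr⟩ := ih
      rw [pow_succ 5 s, pow_mul, sub_eq_iff_eq_add.1 hr]
      refine ⟨r + 5 * (2 * 5 ^ (s + l) * r ^ 2 + 2 * 5 ^ (2 * (s + l) + 1) * r ^ 3
        + 5 ^ (3 * (s + l) + 2) * r ^ 4 + 5 ^ (4 * (s + l) + 2) * r ^ 5), by ring⟩
  have h1 := key t (c ^ 3 * (u + 5 ^ t * d))
  set y := 1 + 5 ^ (l + 1) * (c ^ 3 * (u + 5 ^ t * d))
  have h2 : (5 : ℤ_[5]) ^ (t + l + 1) ∣ y ^ (5 ^ t * g) - 1 := by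
    rw [pow_mul]
    exact h1.trans (by simpa using sub_dvd_pow_sub_pow (y ^ 5 ^ t) 1 g)
  rw [hxy, hm, Nat.add_sub_cancel_left]
  have : (c * y) ^ (1 + 5 ^ t * g) - c ^ (5 ^ t * g) * (c * y)
      = c ^ (5 ^ t * g) * c * y * (y ^ (5 ^ t * g) - 1) := by
    rw [pow_add, mul_pow c y (5 ^ t * g)]; ring
  rw [this]
  exact h2.mul_left _

lemma B_dense {t q : ℕ} (ht : 1 ≤ t) (hq : 1 ≤ q) (hP : P t (q : ℤ_[5])) {c : ℤ_[5]}
    (hc : c ^ 4 = 1) (hcq : c ^ q = c) {l : ℕ} {u x z : ℤ_[5]} (hu : ¬ (5 : ℤ_[5]) ∣ u)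
    (hx : x ∈ B t c l u) (hz : z ∈ B t c l u) (s : ℕ) :
    ∃ n : ℕ, (5 : ℤ_[5]) ^ s ∣ x ^ q ^ n - z := by
  obtain ⟨w, hw, -, hxw⟩ := B_form ht hu hx
  have hxy : x = c * (1 + 5 ^ (l + 1) * (c ^ 3 * w)) := by
    linear_combination hxw - (5 ^ (l + 1) * w) * hc
  have hPy : P (l + 1) (1 + 5 ^ (l + 1) * (c ^ 3 * w)) := by
    refine ⟨_, ?_, rfl⟩
    intro h
    apply hw
    have : w = c * (c ^ 3 * w) := by linear_combination (-w) * hc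
    rw [this]; exact h.mul_left _
  set y := 1 + 5 ^ (l + 1) * (c ^ 3 * w)
  have hyz : (5 : ℤ_[5]) ^ (l + 1 + t) ∣ y - c ^ 3 * z := by
    have h1 : (5 : ℤ_[5]) ^ (t + l + 1) ∣ x - z := by
      have := dvd_sub hx hz
      convert this using 1; ring
    have h2 : y - c ^ 3 * z = c ^ 3 * (x - z) := by
      rw [hxy]; linear_combination (-y) * hc
    rw [h2, show l + 1 + t = t + l + 1 by ring]
    exact h1.mul_left _
  obtain ⟨n, hn⟩ := dense_aux (by omega) ht hq hP hPy hyz s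
  refine ⟨n, ?_⟩
  have hcn : c ^ q ^ n = c := by
    clear hn
    induction n with
    | zero => simp
    | succ n ih => rw [pow_succ, pow_mul, ih, hcq]
  have : x ^ q ^ n - z = c * (y ^ q ^ n - c ^ 3 * z) := by
    rw [hxy, mul_pow, hcn]; linear_combination (-z) * (-hc)
  rw [this]
  exact ((pow_dvd_pow _ (by omega)).trans hn).mul_left _

lemma mem_closure_of {S : Set ℤ_[5]} {z : ℤ_[5]}
    (h : ∀ s : ℕ, ∃ x ∈ S, (5 : ℤ_[5]) ^ s ∣ x - z) : z ∈ closure S := by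
  rw [Metric.mem_closure_iff]
  intro ε hε
  obtain ⟨s, hs⟩ := PadicInt.exists_pow_neg_lt 5 hε
  obtain ⟨x, hxS, hx⟩ := h s
  refine ⟨x, hxS, lt_of_le_of_lt ?_ hs⟩
  rw [dist_comm, dist_eq_norm, PadicInt.norm_le_pow_iff_mem_span_pow, Ideal.mem_span_singleton]
  exact_mod_cast hx

lemma exists_appr {t : ℕ} (ht : 1 ≤ t) (c : ℤ_[5]) (l : ℕ) (w : ℤ_[5]) (hw : ¬ (5 : ℤ_[5]) ∣ w) :
    ∃ a i : ℕ, a < 5 ^ (t - 1) ∧ 1 ≤ i ∧ i ≤ 4 ∧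
      c + 5 ^ (l + 1) * w ∈ B t c l ((i : ℤ_[5]) + 5 * a) := by
  have h1 := PadicInt.appr_lt (p := 5) w t
  have h2 := PadicInt.appr_spec (p := 5) t w
  rw [Ideal.mem_span_singleton] at h2
  generalize PadicInt.appr w t = n at h1 h2
  have h3 : (5 : ℤ_[5]) ^ t ∣ w - n := by exact_mod_cast h2
  obtain ⟨d, hd⟩ := h3
  have hn : ¬ 5 ∣ n := by
    intro h
    apply hw
    have : w = n + 5 ^ t * d := by linear_combination hd
    rw [this]
    exact dvd_add ((dvd_nat1 n).2 h) ((dvd_pow_self _ (by omega)).mul_right _)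
  obtain ⟨t, rfl⟩ := Nat.exists_eq_add_of_le' ht
  rw [pow_succ] at h1
  refine ⟨n / 5, n % 5, ?_, by omega, by omega, d, ?_⟩
  · rw [Nat.add_sub_cancel]; omega
  · have h4 : (n : ℤ_[5]) = ((n % 5 : ℕ) : ℤ_[5]) + 5 * ((n / 5 : ℕ) : ℤ_[5]) := by
      exact_mod_cast (Nat.mod_add_div n 5).symm
    rw [← h4]
    linear_combination (5 ^ (l + 1)) * hd

lemma exists_val (z : ℤ_[5]) (hz : z ≠ 0) : ∃ (l : ℕ) (w : ℤ_[5]), ¬ (5 : ℤ_[5]) ∣ w ∧ z = 5 ^ l * w := by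
  obtain ⟨l, w, h1, h2⟩ := WfDvdMonoid.max_power_factor hz prime5.irreducible
  exact ⟨l, w, h1, h2⟩

lemma idx_not_dvd {a i : ℕ} (h1 : 1 ≤ i) (h2 : i ≤ 4) : ¬ (5 : ℤ_[5]) ∣ (i : ℤ_[5]) + 5 * a := by
  intro h
  have := (dvd_nat1 (i + 5 * a)).1 (by push_cast; exact h)
  omega

lemma idx_inj {t a i a' i' : ℕ} (ht : 1 ≤ t) (ha : a < 5 ^ (t - 1)) (ha' : a' < 5 ^ (t - 1))
    (h2 : i ≤ 4) (h2' : i' ≤ 4)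
    (h : (5 : ℤ_[5]) ^ t ∣ ((i : ℤ_[5]) + 5 * a) - ((i' : ℤ_[5]) + 5 * a')) : a = a' ∧ i = i' := by
  have h3 := (PadicInt.pow_p_dvd_int_iff (p := 5) t ((i + 5 * a : ℤ) - (i' + 5 * a'))).1
    (by push_cast; exact h)
  obtain ⟨t, rfl⟩ := Nat.exists_eq_add_of_le' ht
  rw [Nat.add_sub_cancel] at ha ha'
  have h4 := Int.eq_zero_of_abs_lt_dvd h3 (by
    rw [abs_lt]
    have e : ((5 : ℕ) : ℤ) ^ (t + 1) = 5 * ((5 ^ t : ℕ) : ℤ) := by push_cast; ring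
    rw [e]
    generalize 5 ^ t = N at ha ha'
    constructor <;> omega)
  omega

lemma unit_cases {I x : ℤ_[5]} (hI5 : (5 : ℤ_[5]) ∣ I - 2) (hx : ¬ (5 : ℤ_[5]) ∣ x) :
    ∃ c, (c = 1 ∨ c = -1 ∨ c = I ∨ c = -I) ∧ (5 : ℤ_[5]) ∣ x - c := by
  obtain ⟨n, h5, hn⟩ := PadicInt.exists_mem_range (p := 5) x
  rw [PadicInt.maximalIdeal_eq_span_p, Ideal.mem_span_singleton] at hn
  obtain ⟨d, hd⟩ := hn
  obtain ⟨e, he⟩ := hI5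
  interval_cases n
  · exact absurd ⟨d, by push_cast at hd; linear_combination hd⟩ hx
  · exact ⟨1, by simp, d, by push_cast at hd; linear_combination hd⟩
  · exact ⟨I, by simp, d - e, by push_cast at hd; linear_combination hd - he⟩
  · exact ⟨-I, by simp, d + 1 + e, by push_cast at hd; linear_combination hd + he⟩
  · exact ⟨-1, by simp, d + 1, by push_cast at hd; linear_combination hd⟩

end MonoZ5

open MonoZ5

/-- Minimal decomposition for `x ↦ x^m` on `ℤ_5` with `m ≡ 11 (mod 20)`:
the sets `M_{l,a,i,1} = 1 + 5^(l+1)i + 5^(l+2)a + 5^(t+l+1)ℤ_5`,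
`M_{l,a,i,2} = -1 + 5^(l+1)i + 5^(l+2)a + 5^(t+l+1)ℤ_5` and
`M_{l,a,i,3} = (𝕚 + 5^(l+1)i + 5^(l+2)a + 5^(t+l+1)ℤ_5) ∪
(-𝕚 - 5^(l+1)i - 5^(l+2)a + 5^(t+l+1)ℤ_5)` are pairwise disjoint clopen minimal
components, together with `{1, -1, 𝕚, -𝕚}` they cover exactly the 5-adic units;
moreover `1, -1` are fixed and `𝕚, -𝕚` form a 2-cycle. -/
theorem monomial_Z5_eleven_mod_twenty_decomposition (m : ℕ) (hm : 2 ≤ m)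
    (hmod : m % 20 = 11)
    (t : ℕ) (ht : t = padicValNat 5 (m - 1))
    (I : ℤ_[5]) (hI2 : I ^ 2 = -1) (hI5 : (5 : ℤ_[5]) ∣ I - 2)
    (M : ℕ → ℕ → ℕ → ℕ → Set ℤ_[5])
    (hM1 : ∀ l a i, M l a i 1 =
      {x : ℤ_[5] | (5 : ℤ_[5]) ^ (t + l + 1) ∣
        x - (1 + 5 ^ (l + 1) * (i : ℤ_[5]) + 5 ^ (l + 2) * (a : ℤ_[5]))})
    (hM2 : ∀ l a i, M l a i 2 =
      {x : ℤ_[5] | (5 : ℤ_[5]) ^ (t + l + 1) ∣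
        x - (-1 + 5 ^ (l + 1) * (i : ℤ_[5]) + 5 ^ (l + 2) * (a : ℤ_[5]))})
    (hM3 : ∀ l a i, M l a i 3 =
      {x : ℤ_[5] | (5 : ℤ_[5]) ^ (t + l + 1) ∣
        x - (I + 5 ^ (l + 1) * (i : ℤ_[5]) + 5 ^ (l + 2) * (a : ℤ_[5]))} ∪
      {x : ℤ_[5] | (5 : ℤ_[5]) ^ (t + l + 1) ∣
        x - (-I - 5 ^ (l + 1) * (i : ℤ_[5]) - 5 ^ (l + 2) * (a : ℤ_[5]))}) :
    (∀ l a i j l' a' i' j',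
      a < 5 ^ (t - 1) → a' < 5 ^ (t - 1) → 1 ≤ i → i ≤ 4 → 1 ≤ i' → i' ≤ 4 →
      1 ≤ j → j ≤ 3 → 1 ≤ j' → j' ≤ 3 →
      (l, a, i, j) ≠ (l', a', i', j') → Disjoint (M l a i j) (M l' a' i' j')) ∧
    (∀ l a i j, a < 5 ^ (t - 1) → 1 ≤ i → i ≤ 4 → 1 ≤ j → j ≤ 3 →
      IsClopen (M l a i j) ∧
      (∀ x ∈ M l a i j, x ^ m ∈ M l a i j) ∧
      (∀ x ∈ M l a i j, M l a i j ⊆ closure (Set.range fun n : ℕ => x ^ m ^ n))) ∧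
    ((⋃ l : ℕ, ⋃ a ∈ Finset.range (5 ^ (t - 1)), ⋃ i ∈ Finset.Icc 1 4,
        ⋃ j ∈ Finset.Icc 1 3, M l a i j)
        ∪ {1, -1, I, -I} = {x : ℤ_[5] | ¬ (5 : ℤ_[5]) ∣ x}) ∧
    ((1 : ℤ_[5]) ^ m = 1 ∧ (-1 : ℤ_[5]) ^ m = -1 ∧ I ^ m = -I ∧ (-I) ^ m = I) := by
  have ht1 : 1 ≤ t := by
    rw [ht]
    exact one_le_padicValNat_of_dvd (by omega) (by omega)
  obtain ⟨g, hg, hmg⟩ : ∃ g, ¬ 5 ∣ g ∧ m = 1 + 5 ^ t * g := by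
    obtain ⟨g, hg⟩ := pow_padicValNat_dvd (p := 5) (n := m - 1)
    rw [← ht] at hg
    refine ⟨g, ?_, by omega⟩
    rintro ⟨h, rfl⟩
    have h1 : 5 ^ (t + 1) ∣ m - 1 := ⟨h, by rw [hg]; ring⟩
    have h2 := (padicValNat_dvd_iff_le (p := 5) (by omega : m - 1 ≠ 0)).1 h1
    omega
  have hP : P t ((m ^ 2 : ℕ) : ℤ_[5]) := by
    refine ⟨((g * (m + 1) : ℕ) : ℤ_[5]), ?_, ?_⟩
    · rw [dvd_nat1]
      intro h
      rcases (Nat.Prime.dvd_mul (by norm_num)).1 h with h | h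
      · exact hg h
      · omega
    · have : m ^ 2 = 1 + 5 ^ t * (g * (m + 1)) := by
        calc m ^ 2 = m * m := by ring
          _ = (1 + 5 ^ t * g) * m := by rw [← hmg]
          _ = m + 5 ^ t * g * m := by ring
          _ = (1 + 5 ^ t * g) + 5 ^ t * g * m := by rw [← hmg]
          _ = _ := by ring
      exact_mod_cast congrArg (Nat.cast (R := ℤ_[5])) this
  have hq1 : 1 ≤ m ^ 2 := Nat.one_le_pow _ _ (by omega)
  obtain ⟨d, hd⟩ : ∃ d, m = 4 * d + 3 := ⟨m / 4, by omega⟩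
  have hroot : ∀ c : ℤ_[5], c ^ 4 = 1 → c ^ m = c ^ 3 := by
    intro c hc
    rw [hd, pow_add, pow_mul, hc, one_pow, one_mul]
  have hroot1 : ∀ c : ℤ_[5], c ^ 4 = 1 → c ^ (m - 1) = c ^ 2 := by
    intro c hc
    rw [hd, show 4 * d + 3 - 1 = 4 * d + 2 by omega, pow_add, pow_mul, hc, one_pow, one_mul]
  have hrootq : ∀ c : ℤ_[5], c ^ 4 = 1 → c ^ m ^ 2 = c := by
    intro c hc
    rw [pow_two, pow_mul, hroot c hc, hroot _ (by rw [← pow_mul, mul_comm, pow_mul, hc, one_pow])]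
    linear_combination (c ^ 5 + c) * hc
  have h14 : (1 : ℤ_[5]) ^ 4 = 1 := by norm_num
  have hn14 : (-1 : ℤ_[5]) ^ 4 = 1 := by norm_num
  have hI4 : I ^ 4 = 1 := by linear_combination (I ^ 2 - 1) * hI2
  have hnI4 : (-I) ^ 4 = 1 := by linear_combination (I ^ 2 - 1) * hI2
  have hB1 : ∀ l a i, M l a i 1 = B t 1 l ((i : ℤ_[5]) + 5 * a) := by
    intro l a i
    rw [hM1]; unfold B
    ext x
    simp only [Set.mem_ofPred_eq]
    ring_nf
  have hB2 : ∀ l a i, M l a i 2 = B t (-1) l ((i : ℤ_[5]) + 5 * a) := by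
    intro l a i
    rw [hM2]; unfold B
    ext x
    simp only [Set.mem_ofPred_eq]
    ring_nf
  have hB3 : ∀ l a i, M l a i 3 = B t I l ((i : ℤ_[5]) + 5 * a)
      ∪ B t (-I) l (-((i : ℤ_[5]) + 5 * a)) := by
    intro l a i
    rw [hM3]; unfold B
    ext x
    simp only [Set.mem_ofPred_eq, Set.mem_union]
    ring_nf
  have two_ne : (2 : ℤ_[5]) ≠ 0 := two_ne_zero
  have hI0 : I ≠ 0 := by rintro rfl; norm_num at hI2
  have n1 : (1 : ℤ_[5]) ≠ -1 := fun h => two_ne (by linear_combination h)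
  have n2 : (1 : ℤ_[5]) ≠ I := fun h => two_ne (by linear_combination (1 + I) * h + hI2)
  have n3 : (1 : ℤ_[5]) ≠ -I := fun h => two_ne (by linear_combination (1 - I) * h + hI2)
  have n4 : (-1 : ℤ_[5]) ≠ I := fun h => n3 (by linear_combination -h)
  have n5 : (-1 : ℤ_[5]) ≠ -I := fun h => n2 (by linear_combination -h)
  have n6 : I ≠ -I := fun h =>
    (mul_ne_zero two_ne hI0) (by linear_combination h)
  -- description of the members
  have hmem : ∀ l a i j x, 1 ≤ j → j ≤ 3 → x ∈ M l a i j →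
      ∃ c u, c ^ 4 = 1 ∧ x ∈ B t c l u ∧ ((j = 1 ∧ c = 1 ∧ u = (i : ℤ_[5]) + 5 * a) ∨
        (j = 2 ∧ c = -1 ∧ u = (i : ℤ_[5]) + 5 * a) ∨ (j = 3 ∧ c = I ∧ u = (i : ℤ_[5]) + 5 * a) ∨
        (j = 3 ∧ c = -I ∧ u = -((i : ℤ_[5]) + 5 * a))) := by
    intro l a i j x hj1 hj3 hx
    interval_cases j
    · rw [hB1] at hx; exact ⟨_, _, h14, hx, by simp⟩
    · rw [hB2] at hx; exact ⟨_, _, hn14, hx, by simp⟩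
    · rw [hB3] at hx
      rcases hx with hx | hx
      · exact ⟨_, _, hI4, hx, by simp⟩
      · exact ⟨_, _, hnI4, hx, by simp⟩
  refine ⟨?_, ?_, ?_, ?_⟩
  · intro l a i j l' a' i' j' ha ha' hi1 hi4 hi1' hi4' hj1 hj3 hj1' hj3' hne
    rw [Set.disjoint_left]
    intro x hx hx'
    apply hne
    have hu := idx_not_dvd (a := a) hi1 hi4
    have hu' := idx_not_dvd (a := a') hi1' hi4'
    have hinj := idx_inj ht1 ha ha' hi4 hi4'
    obtain ⟨c, u, hc, hxB, hcase⟩ := hmem _ _ _ _ _ hj1 hj3 hx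
    obtain ⟨c', u', hc', hxB', hcase'⟩ := hmem _ _ _ _ _ hj1' hj3' hx'
    have huu : ¬ (5 : ℤ_[5]) ∣ u := by
      rcases hcase with ⟨-, -, rfl⟩ | ⟨-, -, rfl⟩ | ⟨-, -, rfl⟩ | ⟨-, -, rfl⟩
      · exact hu
      · exact hu
      · exact hu
      · rw [dvd_neg]; exact hu
    have huu' : ¬ (5 : ℤ_[5]) ∣ u' := by
      rcases hcase' with ⟨-, -, rfl⟩ | ⟨-, -, rfl⟩ | ⟨-, -, rfl⟩ | ⟨-, -, rfl⟩
      · exact hu'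
      · exact hu'
      · exact hu'
      · rw [dvd_neg]; exact hu'
    obtain ⟨hcc, hll, hdv⟩ := B_disj ht1 hc hc' huu huu' hxB hxB'
    have hfin : j = j' ∧ (5 : ℤ_[5]) ^ t ∣ ((i : ℤ_[5]) + 5 * a) - ((i' : ℤ_[5]) + 5 * a') := by
      rcases hcase with ⟨rfl, rfl, rfl⟩ | ⟨rfl, rfl, rfl⟩ | ⟨rfl, rfl, rfl⟩ | ⟨rfl, rfl, rfl⟩ <;>
      rcases hcase' with ⟨rfl, h1, rfl⟩ | ⟨rfl, h1, rfl⟩ | ⟨rfl, h1, rfl⟩ | ⟨rfl, h1, rfl⟩ <;>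
      first
      | exact ⟨rfl, hdv⟩
      | (exfalso; rw [← hcc] at h1
         first
         | exact n1 h1 | exact n2 h1 | exact n3 h1 | exact n4 h1 | exact n5 h1 | exact n6 h1
         | exact n1 h1.symm | exact n2 h1.symm | exact n3 h1.symm | exact n4 h1.symm
         | exact n5 h1.symm | exact n6 h1.symm)
      | exact ⟨rfl, by rw [← dvd_neg]; convert hdv using 1; ring⟩
    obtain ⟨rfl, h2⟩ := hfin
    obtain ⟨rfl, rfl⟩ := hinj h2
    rw [hll]
  · intro l a i j ha hi1 hi4 hj1 hj3
    have hu := idx_not_dvd (a := a) hi1 hi4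
    generalize hv : (i : ℤ_[5]) + 5 * a = v at hu
    have hnu : ¬ (5 : ℤ_[5]) ∣ -v := by rwa [dvd_neg]
    -- invariance of a single ball
    have inv1 : ∀ c x u, c ^ 4 = 1 → c ^ 2 = 1 → x ∈ B t c l u → x ^ m ∈ B t c l u := by
      intro c x u hc hc2 hx
      have h := B_inv hmg hc hx
      rw [hroot1 c hc, hc2] at h
      have h2 := dvd_add h hx
      change (5 : ℤ_[5]) ^ (t + l + 1) ∣ x ^ m - (c + 5 ^ (l + 1) * u)
      convert h2 using 1; ring
    have inv2 : ∀ c x u, c ^ 4 = 1 → c ^ 2 = -1 → x ∈ B t c l u → x ^ m ∈ B t (-c) l (-u) := by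
      intro c x u hc hc2 hx
      have h := B_inv hmg hc hx
      rw [hroot1 c hc, hc2] at h
      have h2 := dvd_sub h hx
      change (5 : ℤ_[5]) ^ (t + l + 1) ∣ x ^ m - (-c + 5 ^ (l + 1) * -u)
      convert h2 using 1; ring
    have dense1 : ∀ c x z u, ¬ (5 : ℤ_[5]) ∣ u → c ^ 4 = 1 → x ∈ B t c l u → z ∈ B t c l u →
        z ∈ closure (Set.range fun n : ℕ => x ^ m ^ n) := by
      intro c x z u hu hc hx hz
      apply mem_closure_of
      intro s
      obtain ⟨n, hn⟩ := B_dense ht1 hq1 hP hc (hrootq c hc) hu hx hz s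
      exact ⟨_, ⟨2 * n, rfl⟩, by simpa only [pow_mul] using hn⟩
    have dense2 : ∀ c x z u, ¬ (5 : ℤ_[5]) ∣ u → c ^ 4 = 1 → x ^ m ∈ B t c l u → z ∈ B t c l u →
        z ∈ closure (Set.range fun n : ℕ => x ^ m ^ n) := by
      intro c x z u hu hc hx hz
      refine closure_mono ?_ (dense1 c (x ^ m) z u hu hc hx hz)
      rintro _ ⟨n, rfl⟩
      exact ⟨n + 1, by simp only [pow_succ']; rw [pow_mul]⟩
    interval_cases j
    · rw [hB1, hv]
      exact ⟨B_clopen _ _ _ _, fun x hx => inv1 _ _ _ h14 (by norm_num) hx,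
        fun x hx z hz => dense1 _ x z _ hu h14 hx hz⟩
    · rw [hB2, hv]
      exact ⟨B_clopen _ _ _ _, fun x hx => inv1 _ _ _ hn14 (by norm_num) hx,
        fun x hx z hz => dense1 _ x z _ hu hn14 hx hz⟩
    · rw [hB3, hv]
      have hnI2 : (-I) ^ 2 = -1 := by rw [neg_sq, hI2]
      have f1 : ∀ x, x ∈ B t I l v → x ^ m ∈ B t (-I) l (-v) := fun x hx => inv2 _ _ _ hI4 hI2 hx
      have f2 : ∀ x, x ∈ B t (-I) l (-v) → x ^ m ∈ B t I l v := fun x hx => by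
        simpa using inv2 _ _ _ hnI4 hnI2 hx
      refine ⟨(B_clopen _ _ _ _).union (B_clopen _ _ _ _), ?_, ?_⟩
      · rintro x (hx | hx)
        · exact Or.inr (f1 x hx)
        · exact Or.inl (f2 x hx)
      · rintro x (hx | hx) z (hz | hz)
        · exact dense1 _ x z _ hu hI4 hx hz
        · exact dense2 _ x z _ hnu hnI4 (f1 x hx) hz
        · exact dense2 _ x z _ hu hI4 (f2 x hx) hz
        · exact dense1 _ x z _ hnu hnI4 hx hz
  · have hunit : ∀ c x : ℤ_[5], c ^ 4 = 1 → (5 : ℤ_[5]) ∣ x - c → ¬ (5 : ℤ_[5]) ∣ x := by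
      intro c x hc h h5
      have h1 : (5 : ℤ_[5]) ∣ c := (dvd_sub_right h5).1 h
      have h2 : (5 : ℤ_[5]) ∣ c ^ 4 := dvd_pow h1 (by norm_num)
      rw [hc] at h2
      exact prime5.not_isUnit (isUnit_of_dvd_one h2)
    apply Set.Subset.antisymm
    · rintro x (hx | hx)
      · simp only [Set.mem_iUnion, Finset.mem_range, Finset.mem_Icc] at hx
        obtain ⟨l, a, ha, i, ⟨hi1, hi4⟩, j, ⟨hj1, hj3⟩, hx⟩ := hx
        obtain ⟨c, u, hc, ⟨e, he⟩, -⟩ := hmem _ _ _ _ _ hj1 hj3 hx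
        exact hunit c x hc ⟨5 ^ l * u + 5 ^ (t + l) * e, by linear_combination he⟩
      · rcases hx with rfl | rfl | rfl | rfl
        · exact hunit _ _ h14 (by simp)
        · exact hunit _ _ hn14 (by simp)
        · exact hunit _ _ hI4 (by simp)
        · exact hunit _ _ hnI4 (by simp)
    · intro x hx
      obtain ⟨c, hc, z, hz⟩ := unit_cases hI5 hx
      by_cases hz0 : z = 0
      · right
        have : x = c := by rw [hz0] at hz; linear_combination hz
        subst this
        exact hc
      · left
        obtain ⟨l, w, hw, rfl⟩ := exists_val z hz0
        have hxw : x = c + 5 ^ (l + 1) * w := by linear_combination hz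
        simp only [Set.mem_iUnion, Finset.mem_range, Finset.mem_Icc]
        rcases hc with rfl | rfl | rfl | rfl
        · obtain ⟨a, i, ha, hi1, hi4, hB⟩ := exists_appr ht1 1 l w hw
          exact ⟨l, a, ha, i, ⟨hi1, hi4⟩, 1, by norm_num, by rw [hB1, hxw]; exact hB⟩
        · obtain ⟨a, i, ha, hi1, hi4, hB⟩ := exists_appr ht1 (-1) l w hw
          exact ⟨l, a, ha, i, ⟨hi1, hi4⟩, 2, by norm_num, by rw [hB2, hxw]; exact hB⟩
        · obtain ⟨a, i, ha, hi1, hi4, hB⟩ := exists_appr ht1 c l w hw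
          exact ⟨l, a, ha, i, ⟨hi1, hi4⟩, 3, by norm_num, by rw [hB3, hxw]; exact Or.inl hB⟩
        · obtain ⟨a, i, ha, hi1, hi4, hB⟩ := exists_appr ht1 I l (-w) (by rwa [dvd_neg])
          refine ⟨l, a, ha, i, ⟨hi1, hi4⟩, 3, by norm_num, ?_⟩
          rw [hB3, hxw]
          refine Or.inr (B_neg.2 ?_)
          convert hB using 1; ring
  · refine ⟨one_pow _, ?_, ?_, ?_⟩
    · rw [hroot _ hn14]; norm_num
    · rw [hroot _ hI4]; linear_combination I * hI2
    · rw [hroot _ hnI4]; linear_combination -I * hI2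
end
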